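/- arXiv:2204.04755 — 3 statements merged into one kernel-verified Lean document; each statement's English description precedes it below -/
import Mathlib

section
/- Let F be a finite field with |F| = q. For every vertex v of the symplectic graph Sp(4,q), the subgraph induced on the neighbourhood N(v) is a disjoint union of cliques: the relation 'equal or adjacent' restricted to N(v) is an equivalence relation, and each of its equivalence classes has exactly q elements (so there are exactly q+1 classes). -/
/-!
If `y` is a neighbour of `v`, the line `L` joining them is totally isotropic of half the dimension
of the space, so `L^⊥ = L`. Hence a neighbour `x` of `v` is equal or adjacent to `y` exactly when it
lies on `L`, that is, when projection from `v` sends `x` and `y` to the same point of `ℙ(v^⊥ / v)`.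
The classes are therefore the fibres of this projection: the points other than `v` of a projective
line through `v`, one class for each point of the projective line `ℙ(v^⊥ / v)`.
-/

open scoped Classical LinearAlgebra.Projectivization

/-- The symplectic form on `F^4` given by `u₀w₁ − u₁w₀ + u₂w₃ − u₃w₂`. -/
def sympForm {F : Type} [Field F] (u w : Fin 4 → F) : F :=
  u 0 * w 1 - u 1 * w 0 + u 2 * w 3 - u 3 * w 2

/-- The symplectic graph `Sp(4,q)`. -/
def spGraph (F : Type) [Field F] : SimpleGraph (ℙ F (Fin 4 → F)) :=
  SimpleGraph.fromRel (fun x y => sympForm x.rep y.rep = 0)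

noncomputable instance (F : Type) [Field F] [Fintype F] : Fintype (ℙ F (Fin 4 → F)) :=
  have : Finite (ℙ F (Fin 4 → F)) := Quotient.finite _
  Fintype.ofFinite _

open Module

section Projective

variable {K V : Type*} [DivisionRing K] [AddCommGroup V] [Module K V]

lemma mem_projectivization_iff_rep_mem (W : Submodule K V) (x : ℙ K V) :
    x ∈ W.projectivization ↔ x.rep ∈ W := by
  rw [W.mem_projectivization_iff_submodule_le, x.submodule_eq,
    Submodule.span_singleton_le_iff_mem]

lemma rep_mem_submodule_iff {x y : ℙ K V} : x.rep ∈ y.submodule ↔ x = y := by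
  rw [y.submodule_eq, Submodule.mem_span_singleton,
    ← Projectivization.mk_eq_mk_iff' K _ _ x.rep_nonzero y.rep_nonzero, x.mk_rep, y.mk_rep]

lemma finrank_submodule_sup_submodule {x y : ℙ K V} (hxy : x ≠ y) :
    finrank K ↥(x.submodule ⊔ y.submodule) = 2 := by
  have hdisj : Disjoint x.submodule y.submodule := by
    rw [y.submodule_eq, Submodule.disjoint_span_singleton' y.rep_nonzero, rep_mem_submodule_iff]
    exact hxy.symm
  have h := Submodule.finrank_sup_add_finrank_inf_eq x.submodule y.submodule
  rwa [hdisj.eq_bot, finrank_bot, x.finrank_submodule, y.finrank_submodule] at h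

lemma range_map_eq_projectivization_range {V' : Type*} [AddCommGroup V'] [Module K V']
    (f : V' →ₗ[K] V) (hf : Function.Injective f) :
    Set.range (Projectivization.map f hf) = f.range.projectivization := by
  ext x
  constructor
  · rintro ⟨y, rfl⟩
    induction y with | h w hw =>
    exact (Submodule.mk_mem_projectivization_iff _ _).2 ⟨w, rfl⟩
  · induction x with | h u hu =>
    intro hu_range
    obtain ⟨w, rfl⟩ := (Submodule.mk_mem_projectivization_iff _ hu).1 hu_range
    exact ⟨.mk K w (by rintro rfl; simp at hu), rfl⟩

lemma nonempty_projectivization_equiv_onePoint {W : Submodule K V} (hW : finrank K W = 2) :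
    Nonempty (W.projectivization ≃ OnePoint K) := by
  have : FiniteDimensional K W := .of_finrank_eq_succ hW
  let b : (Fin 2 → K) ≃ₗ[K] W := .ofFinrankEq _ _ (by simp [hW])
  let f : (Fin 2 → K) →ₗ[K] V := W.subtype ∘ₗ b
  have hf : Function.Injective f := W.injective_subtype.comp b.injective
  have hf_range : f.range = W := by
    rw [LinearMap.range_comp_of_range_eq_top _ b.range, W.range_subtype]
  have hpoints : Set.range (Projectivization.map f hf) = W.projectivization := by
    rw [range_map_eq_projectivization_range, hf_range]
  exact ⟨(Equiv.setCongr hpoints.symm).trans <|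
    (Equiv.ofInjective _ (Projectivization.map_injective f hf)).symm.trans
      (OnePoint.equivProjectivization K).symm⟩

lemma nonempty_projectivization_diff_singleton_equiv {W : Submodule K V} (hW : finrank K W = 2)
    {p : ℙ K V} (hp : p ∈ W.projectivization) :
    Nonempty (((W.projectivization : Set (ℙ K V)) \ {p} : Set (ℙ K V)) ≃ K) := by
  obtain ⟨e⟩ := nonempty_projectivization_equiv_onePoint hW
  let removePoint : {x : W.projectivization // x ≠ ⟨p, hp⟩} ≃ K :=
    Equiv.removeNone ((Equiv.optionSubtypeNe _).trans e)
  refine ⟨Equiv.trans ?_ removePoint⟩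
  exact (Equiv.subtypeSubtypeEquivSubtypeInter _ (· ≠ p)).symm.trans
    (Equiv.subtypeEquivRight fun x ↦ by simp [Subtype.ext_iff])

lemma finrank_map_mkQ_add_finrank {N W : Submodule K V} [FiniteDimensional K W] (h : N ≤ W) :
    finrank K (W.map N.mkQ) + finrank K N = finrank K W := by
  have h_rank := (N.mkQ.domRestrict W).finrank_range_add_finrank_ker
  rwa [LinearMap.range_domRestrict, LinearMap.ker_domRestrict, Submodule.ker_mkQ,
    (Submodule.comapSubtypeEquivOfLe h).finrank_eq] at h_rank

/-- The projection of a projective space from its point `p`, which sends a point `x ≠ p` to the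
line through `p` and `x`, regarded as a point of the projective space of `V ⧸ p.submodule`. -/
noncomputable def projectFrom {p x : ℙ K V} (hx : x ≠ p) : ℙ K (V ⧸ p.submodule) :=
  .mk K (p.submodule.mkQ x.rep) (by simpa [rep_mem_submodule_iff] using hx)

lemma projectFrom_eq_projectFrom_iff {p x y : ℙ K V} (hx : x ≠ p) (hy : y ≠ p) :
    projectFrom hx = projectFrom hy ↔ x ∈ (p.submodule ⊔ y.submodule).projectivization := by
  rw [projectFrom, projectFrom, Projectivization.mk_eq_mk_iff', mem_projectivization_iff_rep_mem,
    ← Submodule.comap_map_mkQ, Submodule.mem_comap, y.submodule_eq, Submodule.map_span,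
    Set.image_singleton, Submodule.mem_span_singleton]

lemma mem_projectivization_map_mkQ_iff {p : ℙ K V} {W : Submodule K V}
    {z : ℙ K (V ⧸ p.submodule)} :
    z ∈ (W.map p.submodule.mkQ).projectivization ↔
      ∃ x ∈ W.projectivization, ∃ hx : x ≠ p, projectFrom hx = z := by
  constructor
  · induction z with | h z hz =>
    intro hzW
    obtain ⟨w, hw, rfl⟩ := (Submodule.mk_mem_projectivization_iff _ hz).1 hzW
    have hwp : w ∉ p.submodule := by simpa using hz
    have hw0 : w ≠ 0 := by rintro rfl; simp at hwp
    obtain ⟨a, ha⟩ := Projectivization.exists_smul_eq_mk_rep K w hw0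
    refine ⟨.mk K w hw0, hw, ?_, ?_⟩
    · rintro rfl
      exact hwp (Submodule.mem_span_singleton_self w)
    · exact (Projectivization.mk_eq_mk_iff K _ _ _ _).2 ⟨a, by rw [← ha]; rfl⟩
  · rintro ⟨x, hxW, hx, rfl⟩
    exact (Submodule.mk_mem_projectivization_iff _ _).2
      (Submodule.mem_map_of_mem ((mem_projectivization_iff_rep_mem W x).1 hxW))

end Projective

section Symplectic

variable {K V : Type*} [Field K] [AddCommGroup V] [Module K V] {B : LinearMap.BilinForm K V}

lemma mem_orthogonal_submodule_iff {x : ℙ K V} {w : V} :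
    w ∈ B.orthogonal x.submodule ↔ B x.rep w = 0 := by
  rw [x.submodule_eq, LinearMap.BilinForm.orthogonal_span_singleton_eq_toLin_ker,
    LinearMap.mem_ker]
  rfl

lemma orthogonal_eq_self_of_two_mul_finrank_eq [FiniteDimensional K V] (hB : B.Nondegenerate)
    {L : Submodule K V} (hL : L ≤ B.orthogonal L) (hdim : 2 * finrank K L = finrank K V) :
    B.orthogonal L = L := by
  refine (Submodule.eq_of_le_of_finrank_eq hL ?_).symm
  rw [LinearMap.BilinForm.finrank_orthogonal hB]
  lia

lemma orthogonal_sup {R M : Type*} [CommSemiring R] [AddCommMonoid M] [Module R M]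
    {B : LinearMap.BilinForm R M} (P Q : Submodule R M) :
    B.orthogonal (P ⊔ Q) = B.orthogonal P ⊓ B.orthogonal Q := by
  refine le_antisymm (le_inf (LinearMap.BilinForm.orthogonal_le le_sup_left)
    (LinearMap.BilinForm.orthogonal_le le_sup_right)) ?_
  rintro x ⟨hP, hQ⟩ _ hpq
  obtain ⟨p, hp, q, hq, rfl⟩ := Submodule.mem_sup.1 hpq
  rw [map_add, LinearMap.add_apply, hP p hp, hQ q hq, add_zero]

lemma submodule_le_orthogonal_submodule_iff {x y : ℙ K V} :
    y.submodule ≤ B.orthogonal x.submodule ↔ B x.rep y.rep = 0 := by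
  rw [← Submodule.mem_projectivization_iff_submodule_le, mem_projectivization_iff_rep_mem,
    mem_orthogonal_submodule_iff]

lemma orthogonal_submodule_sup_submodule_eq_self (hAlt : B.IsAlt) (hB : B.Nondegenerate)
    (hV : finrank K V = 4) {x y : ℙ K V} (hxy : x ≠ y) (h : B x.rep y.rep = 0) :
    B.orthogonal (x.submodule ⊔ y.submodule) = x.submodule ⊔ y.submodule := by
  have : FiniteDimensional K V := .of_finrank_eq_succ hV
  refine orthogonal_eq_self_of_two_mul_finrank_eq hB ?_ ?_
  · simp only [orthogonal_sup, sup_le_iff, le_inf_iff, submodule_le_orthogonal_submodule_iff]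
    exact ⟨⟨hAlt _, h⟩, hAlt.isRefl.eq_iff.1 h, hAlt _⟩
  · rw [finrank_submodule_sup_submodule hxy, hV]

lemma finrank_map_mkQ_orthogonal_submodule (hAlt : B.IsAlt) (hB : B.Nondegenerate)
    [FiniteDimensional K V] (x : ℙ K V) :
    finrank K ((B.orthogonal x.submodule).map x.submodule.mkQ) = finrank K V - 2 := by
  have h_le : x.submodule ≤ B.orthogonal x.submodule :=
    submodule_le_orthogonal_submodule_iff.2 (hAlt _)
  have h := finrank_map_mkQ_add_finrank h_le
  rw [LinearMap.BilinForm.finrank_orthogonal hB, x.finrank_submodule] at h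
  lia

/-- The symplectic graph of a form `B`: its vertices are the points of the projective space of `V`,
and distinct points are adjacent when they are orthogonal. -/
def symplecticGraph (B : LinearMap.BilinForm K V) : SimpleGraph (ℙ K V) :=
  SimpleGraph.fromRel fun x y ↦ B x.rep y.rep = 0

namespace symplecticGraph

lemma adj_iff (hB : B.IsRefl) {x y : ℙ K V} :
    (symplecticGraph B).Adj x y ↔ x ≠ y ∧ B x.rep y.rep = 0 := by
  rw [symplecticGraph, SimpleGraph.fromRel_adj, hB.eq_iff (x := y.rep), or_self]

lemma eq_or_adj_iff (hB : B.IsAlt) {x y : ℙ K V} :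
    x = y ∨ (symplecticGraph B).Adj x y ↔ B x.rep y.rep = 0 := by
  rw [adj_iff hB.isRefl]
  by_cases hxy : x = y <;> simp [hxy, hB y.rep]

lemma neighborSet_eq (hB : B.IsAlt) (v : ℙ K V) :
    (symplecticGraph B).neighborSet v = ↑(B.orthogonal v.submodule).projectivization \ {v} := by
  ext x
  rw [SimpleGraph.mem_neighborSet, adj_iff hB.isRefl, Set.mem_sdiff, SetLike.mem_coe,
    mem_projectivization_iff_rep_mem, mem_orthogonal_submodule_iff, Set.mem_singleton_iff,
    and_comm, ne_comm]

lemma ne_of_mem_neighborSet {v x : ℙ K V} (hx : x ∈ (symplecticGraph B).neighborSet v) :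
    x ≠ v :=
  ((SimpleGraph.mem_neighborSet _ _ _).1 hx).ne'

/-- The line joining `v` to a neighbour `x`, as a point of the projective space of
`V ⧸ v.submodule`; the classes of the relation "equal or adjacent" are the fibres of this map. -/
noncomputable def lineThrough (v : ℙ K V) (x : (symplecticGraph B).neighborSet v) :
    ℙ K (V ⧸ v.submodule) :=
  projectFrom (ne_of_mem_neighborSet x.2)

lemma eq_or_adj_iff_mem_sup (hAlt : B.IsAlt) (hB : B.Nondegenerate) (hV : finrank K V = 4)
    {v x y : ℙ K V} (hx : (symplecticGraph B).Adj v x) (hy : (symplecticGraph B).Adj v y) :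
    x = y ∨ (symplecticGraph B).Adj x y ↔ x ∈ (v.submodule ⊔ y.submodule).projectivization := by
  rw [adj_iff hAlt.isRefl] at hx hy
  rw [eq_or_adj_iff hAlt, mem_projectivization_iff_rep_mem,
    ← orthogonal_submodule_sup_submodule_eq_self hAlt hB hV hy.1 hy.2, orthogonal_sup,
    Submodule.mem_inf, mem_orthogonal_submodule_iff, mem_orthogonal_submodule_iff,
    hAlt.isRefl.eq_iff (x := y.rep)]
  exact (and_iff_right hx.2).symm

lemma eq_or_adj_iff_lineThrough_eq (hAlt : B.IsAlt) (hB : B.Nondegenerate)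
    (hV : finrank K V = 4) {v : ℙ K V} (x y : (symplecticGraph B).neighborSet v) :
    x = y ∨ (symplecticGraph B).Adj ↑x ↑y ↔ lineThrough v x = lineThrough v y := by
  rw [Subtype.ext_iff, eq_or_adj_iff_mem_sup hAlt hB hV x.2 y.2, lineThrough, lineThrough,
    projectFrom_eq_projectFrom_iff]

lemma range_lineThrough (hAlt : B.IsAlt) (v : ℙ K V) :
    Set.range (lineThrough (B := B) v) =
      ((B.orthogonal v.submodule).map v.submodule.mkQ).projectivization := by
  ext z
  rw [SetLike.mem_coe, mem_projectivization_map_mkQ_iff]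
  constructor
  · rintro ⟨x, rfl⟩
    have hx := (neighborSet_eq hAlt v).subset x.2
    exact ⟨x, hx.1, hx.2, rfl⟩
  · rintro ⟨x, hx, hxv, rfl⟩
    exact ⟨⟨x, (neighborSet_eq hAlt v).superset ⟨hx, hxv⟩⟩, rfl⟩

lemma image_val_setOf_eq_or_adj (hAlt : B.IsAlt) (hB : B.Nondegenerate) (hV : finrank K V = 4)
    {v : ℙ K V} (u : (symplecticGraph B).neighborSet v) :
    Subtype.val '' {w : (symplecticGraph B).neighborSet v |
        w = u ∨ (symplecticGraph B).Adj ↑w ↑u} =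
      (↑(v.submodule ⊔ (u : ℙ K V).submodule).projectivization \ {v} : Set (ℙ K V)) := by
  ext x
  constructor
  · rintro ⟨w, hw, rfl⟩
    rw [Set.mem_ofPred_eq, Subtype.ext_iff, eq_or_adj_iff_mem_sup hAlt hB hV w.2 u.2] at hw
    exact ⟨hw, ne_of_mem_neighborSet w.2⟩
  · rintro ⟨hx, hxv⟩
    have h_line_le : v.submodule ⊔ (u : ℙ K V).submodule ≤ B.orthogonal v.submodule := by
      have hu := (adj_iff hAlt.isRefl).1 u.2
      rw [← orthogonal_submodule_sup_submodule_eq_self hAlt hB hV hu.1 hu.2]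
      exact LinearMap.BilinForm.orthogonal_le le_sup_left
    have hxN : x ∈ (symplecticGraph B).neighborSet v :=
      (neighborSet_eq hAlt v).superset ⟨Submodule.projectivization.monotone h_line_le hx, hxv⟩
    refine ⟨⟨x, hxN⟩, ?_, rfl⟩
    rwa [Set.mem_ofPred_eq, Subtype.ext_iff, eq_or_adj_iff_mem_sup hAlt hB hV hxN u.2]

lemma nonempty_setOf_eq_or_adj_equiv (hAlt : B.IsAlt) (hB : B.Nondegenerate)
    (hV : finrank K V = 4) {v : ℙ K V} (u : (symplecticGraph B).neighborSet v) :
    Nonempty ({w : (symplecticGraph B).neighborSet v |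
      w = u ∨ (symplecticGraph B).Adj ↑w ↑u} ≃ K) := by
  obtain ⟨e⟩ := nonempty_projectivization_diff_singleton_equiv (p := v)
    (finrank_submodule_sup_submodule (ne_of_mem_neighborSet u.2).symm)
    ((Submodule.mem_projectivization_iff_submodule_le _ _).2 le_sup_left)
  exact ⟨(Equiv.Set.image _ _ Subtype.val_injective).trans <|
    (Equiv.setCongr (image_val_setOf_eq_or_adj hAlt hB hV u)).trans e⟩

end symplecticGraph

theorem spGraph_firstSubconstituent_unionOfCliques_general {K V : Type*} [Field K]
    [AddCommGroup V] [Module K V] {B : LinearMap.BilinForm K V} (hAlt : B.IsAlt)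
    (hB : B.Nondegenerate) (hV : finrank K V = 4) (v : ℙ K V) :
    Equivalence (fun x y : (symplecticGraph B).neighborSet v =>
      x = y ∨ (symplecticGraph B).Adj ↑x ↑y) ∧
    (∀ u : (symplecticGraph B).neighborSet v,
      Nonempty ({w : (symplecticGraph B).neighborSet v |
        w = u ∨ (symplecticGraph B).Adj ↑w ↑u} ≃ K)) ∧
    Nonempty ({S : Set ((symplecticGraph B).neighborSet v) |
      ∃ u : (symplecticGraph B).neighborSet v,
        S = {w | w = u ∨ (symplecticGraph B).Adj ↑w ↑u}} ≃ OnePoint K) := by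
  have hrel (x y) := symplecticGraph.eq_or_adj_iff_lineThrough_eq hAlt hB hV (v := v) x y
  refine ⟨?_, symplecticGraph.nonempty_setOf_eq_or_adj_equiv hAlt hB hV, ?_⟩
  · simp only [hrel]
    exact (Setoid.ker _).iseqv
  · have : FiniteDimensional K V := .of_finrank_eq_succ hV
    obtain ⟨e⟩ := nonempty_projectivization_equiv_onePoint
      ((finrank_map_mkQ_orthogonal_submodule hAlt hB v).trans (by rw [hV]))
    simp only [hrel]
    exact ⟨(Setoid.quotientEquivClasses (Setoid.ker _)).symm.trans <|
      (Setoid.quotientKerEquivRange _).trans <|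
        (Equiv.setCongr (symplecticGraph.range_lineThrough hAlt v)).trans e⟩

end Symplectic

section StandardForm

variable (F : Type) [Field F]

/-- The symplectic form `sympForm` as a bundled bilinear form. -/
noncomputable def sympBilinForm : LinearMap.BilinForm F (Fin 4 → F) :=
  LinearMap.mk₂ F sympForm
    (by intros; simp only [sympForm, Pi.add_apply]; ring)
    (by intros; simp only [sympForm, Pi.smul_apply, smul_eq_mul]; ring)
    (by intros; simp only [sympForm, Pi.add_apply]; ring)
    (by intros; simp only [sympForm, Pi.smul_apply, smul_eq_mul]; ring)

lemma sympBilinForm_apply (u w : Fin 4 → F) : sympBilinForm F u w = sympForm u w := rfl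

lemma sympBilinForm_isAlt : (sympBilinForm F).IsAlt := fun u ↦ by
  rw [sympBilinForm_apply, sympForm]
  ring

lemma sympBilinForm_nondegenerate : (sympBilinForm F).Nondegenerate := by
  refine (sympBilinForm_isAlt F).isRefl.nondegenerate_iff_separatingLeft.2 fun u hu ↦ ?_
  obtain ⟨h1, h0, h3, h2⟩ : u 1 = 0 ∧ u 0 = 0 ∧ u 3 = 0 ∧ u 2 = 0 := by
    simpa [Fin.forall_fin_succ, sympBilinForm_apply, sympForm] using
      fun i : Fin 4 ↦ hu (Pi.single i 1)
  simp [funext_iff, Fin.forall_fin_succ, h0, h1, h2, h3]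

lemma spGraph_eq_symplecticGraph : spGraph F = symplecticGraph (sympBilinForm F) := rfl

end StandardForm

/-- for every vertex `v` of `Sp(4,q)`, the subgraph induced on the
neighbourhood `N(v)` is a disjoint union of cliques: the relation "equal or adjacent"
restricted to `N(v)` is an equivalence relation, each of its classes has exactly `q`
elements, and there are exactly `q + 1` classes. -/
theorem spGraph_firstSubconstituent_unionOfCliques (F : Type) [Field F] [Fintype F] (q : ℕ)
    (hq : Fintype.card F = q) (v : ℙ F (Fin 4 → F)) :
    Equivalence (fun x y : (spGraph F).neighborSet v => x = y ∨ (spGraph F).Adj ↑x ↑y) ∧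
    (∀ u : (spGraph F).neighborSet v,
      {w : (spGraph F).neighborSet v | w = u ∨ (spGraph F).Adj ↑w ↑u}.ncard = q) ∧
    {S : Set ((spGraph F).neighborSet v) |
      ∃ u : (spGraph F).neighborSet v,
        S = {w | w = u ∨ (spGraph F).Adj ↑w ↑u}}.ncard = q + 1 := by
  rw [spGraph_eq_symplecticGraph]
  obtain ⟨hequiv, hclass, ⟨e⟩⟩ := spGraph_firstSubconstituent_unionOfCliques_general
    (sympBilinForm_isAlt F) (sympBilinForm_nondegenerate F) (finrank_fin_fun F) v
  rw [← Nat.card_eq_fintype_card] at hq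
  refine ⟨hequiv, fun u ↦ ?_, ?_⟩
  · obtain ⟨e⟩ := hclass u
    exact (Nat.card_congr e).trans hq
  · exact (Nat.card_congr e).trans (Finite.card_option.trans (congrArg (· + 1) hq))
end

section
/- Let s ≥ t ≥ 2, let Γ be a strongly regular graph with parameters ((s+1)(st+1), s(t+1), s−1, t+1), and let v be a vertex of Γ. Let C be the subgraph induced on the neighbourhood N(v) and let B be the subgraph induced on the vertices distinct from v and not adjacent to v. Let m₂ and m₄ be natural numbers with m₂·(s+t) = s²·(t²−1) and m₄·(s+t) = t·(s−1)·(s²−t). Then C is a disjoint union of t+1 cliques of size s if and only if the characteristic polynomial over ℚ of the adjacency matrix of B equals (X − (t+1)(s−1)) · (X − (s−1))^{m₂} · (X − (s−t−1))^{(t+1)(s−1)} · (X + (t+1))^{m₄}. -/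
open scoped Classical
open Polynomial

/-!
Split the adjacency matrix at `v` into the diagonal blocks `A` on the neighbours and `B` on the
non-neighbours, and the block `N` between them; put `K = A + 1` and let `J` be the all-ones matrix.
The first subconstituent is a disjoint union of cliques iff `K² = s K`. The blocks of the strongly
regular equation give `(J - K N) Nᵀ = (K + t) (K² - s K)`, and from this and `tr (K² - s K) = 0` one
gets `K² = s K ↔ K N = J`. They also give `f(B) = t (t + 1) (s - 1) J - Nᵀ (J - K N)` for the cubic
`f = (X - (s - 1)) (X + (t + 1)) (X - (s - t - 1))`, so that `K N = J` iff `f(B)` is the multiple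
`t (t + 1) (s - 1)` of `J`. Finally, this last equation confines the eigenvalues of `B` to the roots
of `f` and the valency, and the traces of `1`, `B`, `B²` and `f(B)` yield the multiplicities;
conversely the spectrum of `B` determines `tr (f(B) - t (t + 1) (s - 1) J)²`, which is zero.
-/

open scoped Matrix

section AllOnes

variable {l m n R : Type*}

/-- The all-ones matrix, usually written `J`; its shape varies with the block it stands in. -/
def allOnes (m n R : Type*) [One R] : Matrix m n R := Matrix.of fun _ _ => 1

@[simp]
lemma allOnes_apply [One R] (i : m) (j : n) : allOnes m n R i j = 1 := rfl

@[simp]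
lemma transpose_allOnes [One R] : (allOnes m n R)ᵀ = allOnes n m R := rfl

lemma allOnes_mul_allOnes [Fintype m] [NonAssocSemiring R] :
    allOnes l m R * allOnes m n R = (Fintype.card m : R) • allOnes l n R := by
  ext i j
  simp [Matrix.mul_apply]

lemma trace_allOnes [Fintype n] [AddCommMonoidWithOne R] :
    (allOnes n n R).trace = Fintype.card n := by
  simp [Matrix.trace]

lemma mul_allOnes_of_row_sum [Fintype m] [NonAssocSemiring R] {A : Matrix l m R} {r : R}
    (h : ∀ i, ∑ j, A i j = r) : A * allOnes m n R = r • allOnes l n R := by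
  ext i j
  simp [Matrix.mul_apply, h]

lemma allOnes_mul_of_col_sum [Fintype m] [NonAssocSemiring R] {A : Matrix m n R} {r : R}
    (h : ∀ j, ∑ i, A i j = r) : allOnes l m R * A = r • allOnes l n R := by
  ext i j
  simp [Matrix.mul_apply, h]

end AllOnes

section Spectrum

variable {n : Type*} [Fintype n] [DecidableEq n] {A : Matrix n n ℝ}

lemma eq_zero_of_isSymm_of_trace_mul_self_eq_zero {n : Type*} [Fintype n] {A : Matrix n n ℝ}
    (hA : A.IsSymm) (htr : (A * A).trace = 0) : A = 0 := by
  refine Matrix.trace_conjTranspose_mul_self_eq_zero_iff.1 ?_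
  rwa [Matrix.conjTranspose_eq_transpose_of_trivial, hA.eq]

lemma cfc_eval_eq_aeval (hA : A.IsSymm) (q : ℝ[X]) : cfc q.eval A = aeval A q :=
  cfc_polynomial q A (Matrix.isHermitian_iff_isSymm.2 hA)

lemma isSymm_aeval (hA : A.IsSymm) (q : ℝ[X]) : (aeval A q).IsSymm := by
  rw [← cfc_eval_eq_aeval hA]
  exact Matrix.isHermitian_iff_isSymm.1 (cfc_predicate q.eval A)

lemma roots_charpoly_aeval (hA : A.IsSymm) (q : ℝ[X]) :
    (aeval A q).charpoly.roots = A.charpoly.roots.map q.eval := by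
  have hA' := Matrix.isHermitian_iff_isSymm.2 hA
  have hcp : (aeval A q).charpoly =
      ((A.charpoly.roots.map q.eval).map fun x => X - C x).prod := by
    simp [← cfc_eval_eq_aeval hA, hA'.charpoly_cfc_eq, hA'.roots_charpoly_eq_eigenvalues]
  rw [hcp, roots_multiset_prod_X_sub_C]

lemma trace_aeval (hA : A.IsSymm) (q : ℝ[X]) :
    (aeval A q).trace = (A.charpoly.roots.map q.eval).sum := by
  rw [← roots_charpoly_aeval hA]
  exact Matrix.trace_eq_sum_roots_charpoly_of_splits
    (Matrix.isHermitian_iff_isSymm.2 (isSymm_aeval hA q)).splits_charpoly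

lemma isRoot_of_aeval_eq_zero {n K : Type*} [Fintype n] [DecidableEq n] [Field K]
    {A : Matrix n n K} {q : K[X]} (hq : aeval A q = 0) {x : K} (hx : A.charpoly.IsRoot x) :
    q.IsRoot x := by
  have hx' : x ∈ spectrum K A := Matrix.mem_spectrum_iff_isRoot_charpoly.2 hx
  cases subsingleton_or_nontrivial (Matrix n n K)
  · simp at hx'
  · have hqx : q.eval x ∈ spectrum K (aeval A q) :=
      spectrum.subset_polynomial_aeval A q ⟨x, hx', rfl⟩
    simpa [hq] using hqx

lemma eq_prod_pow_rootMultiplicity {R : Type*} [CommRing R] [IsDomain R] {p : R[X]}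
    (hp : p.Splits) (hmonic : p.Monic) {S : Finset R} (hS : ∀ x ∈ p.roots, x ∈ S) :
    p = ∏ x ∈ S, (X - C x) ^ p.rootMultiplicity x := by
  have hsub : p.roots.toFinset ⊆ S := fun x hx => hS x (Multiset.mem_toFinset.1 hx)
  calc p = (p.roots.map fun x => X - C x).prod := hp.eq_prod_roots_of_monic hmonic
    _ = ∏ x ∈ p.roots.toFinset, (X - C x) ^ p.rootMultiplicity x :=
        p.prod_multiset_root_eq_finset_root
    _ = ∏ x ∈ S, (X - C x) ^ p.rootMultiplicity x :=
        Finset.prod_subset hsub fun x _ hx => by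
          rw [← count_roots, Multiset.count_eq_zero_of_notMem (mt Multiset.mem_toFinset.2 hx),
            pow_zero]

lemma trace_aeval_eq_sum_rootMultiplicity (hA : A.IsSymm) {S : Finset ℝ}
    (hS : ∀ x ∈ A.charpoly.roots, x ∈ S) (q : ℝ[X]) :
    (aeval A q).trace = ∑ x ∈ S, A.charpoly.rootMultiplicity x * q.eval x := by
  have hsub : A.charpoly.roots.toFinset ⊆ S := fun x hx => hS x (Multiset.mem_toFinset.1 hx)
  calc (aeval A q).trace
      = (A.charpoly.roots.map q.eval).sum := trace_aeval hA q
    _ = ∑ x ∈ A.charpoly.roots.toFinset, A.charpoly.roots.count x • q.eval x :=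
        Finset.sum_multiset_map_count _ _
    _ = ∑ x ∈ S, A.charpoly.roots.count x • q.eval x :=
        Finset.sum_subset hsub fun x _ hx => by
          rw [Multiset.count_eq_zero_of_notMem (mt Multiset.mem_toFinset.2 hx), zero_nsmul]
    _ = ∑ x ∈ S, A.charpoly.rootMultiplicity x * q.eval x := by
        simp only [count_roots, nsmul_eq_mul]

lemma aeval_mul_eq_smul {m n R : Type*} [Fintype m] [DecidableEq m] [CommRing R]
    {A : Matrix m m R} {Y : Matrix m n R} {r : R} (hAY : A * Y = r • Y) (q : R[X]) :
    aeval A q * Y = q.eval r • Y := by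
  induction q using Polynomial.induction_on' with
  | add p q hp hq => rw [map_add, Matrix.add_mul, hp, hq, eval_add, add_smul]
  | monomial k a =>
    have hpow : A ^ k * Y = r ^ k • Y := by
      induction k with
      | zero => simp
      | succ k ih => rw [pow_succ, Matrix.mul_assoc, hAY, Matrix.mul_smul, ih, smul_smul, pow_succ']
    rw [aeval_monomial, Algebra.algebraMap_eq_smul_one, Matrix.smul_mul, Matrix.one_mul,
      Matrix.smul_mul, hpow, smul_smul, eval_monomial]

/- Both `q(A)` and `c J` are symmetric, and the hypotheses evaluate every trace in the expansion of
`tr (q(A) - c J)²`, which comes out as zero. -/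
lemma aeval_eq_smul_allOnes_of_charpoly_eq {r c : ℝ} {q g : ℝ[X]} (hA : A.IsSymm)
    (hAJ : A * allOnes n n ℝ = r • allOnes n n ℝ) (hcp : A.charpoly = (X - C r) * g)
    (hg : ∀ x ∈ g.roots, q.IsRoot x) (hc : c * Fintype.card n = q.eval r) :
    aeval A q = c • allOnes n n ℝ := by
  set J := allOnes n n ℝ
  have hqJ : aeval A q * J = (c * Fintype.card n) • J := by rw [hc, aeval_mul_eq_smul hAJ]
  have hJq : J * aeval A q = (c * Fintype.card n) • J := by
    simpa [J, (isSymm_aeval hA q).eq, Matrix.transpose_mul] using congrArg Matrix.transpose hqJ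
  have htr : (aeval A q * aeval A q).trace = (c * Fintype.card n) ^ 2 := by
    have hne : (X - C r) * g ≠ 0 := hcp ▸ A.charpoly_monic.ne_zero
    have hg0 : (g.roots.map (q * q).eval).sum = 0 := Multiset.sum_eq_zero fun y hy => by
      obtain ⟨x, hx, rfl⟩ := Multiset.mem_map.1 hy
      rw [eval_mul, (hg x hx).eq_zero, mul_zero]
    rw [← map_mul, trace_aeval hA, hcp, roots_mul hne, roots_X_sub_C, Multiset.map_add,
      Multiset.sum_add, hg0, Multiset.map_singleton, Multiset.sum_singleton, eval_mul, hc]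
    ring
  refine sub_eq_zero.1 (eq_zero_of_isSymm_of_trace_mul_self_eq_zero ?_ ?_)
  · exact (isSymm_aeval hA q).sub (Matrix.IsSymm.smul transpose_allOnes c)
  · simp only [Matrix.sub_mul, Matrix.mul_sub, Matrix.smul_mul, Matrix.mul_smul, hqJ, hJq,
      J, allOnes_mul_allOnes, Matrix.trace_sub, Matrix.trace_smul, htr, trace_allOnes, smul_eq_mul]
    ring

end Spectrum

/-- The adjacency matrix `M` of a strongly regular graph with parameters `(n, k, a, μ)` satisfies
`M² = (a - μ) M + (k - μ) 1 + μ J`. This structure records what that equation, the valency and the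
diagonals say about the blocks of `M` relative to a vertex: `A` and `B` are the diagonal blocks on
the neighbours and on the non-neighbours of the vertex, and `N` is the block between the two. -/
structure SubconstituentBlocks {P Q : Type*} [Fintype P] [Fintype Q] [DecidableEq P] [DecidableEq Q]
    (k a μ : ℝ) (A : Matrix P P ℝ) (N : Matrix P Q ℝ) (B : Matrix Q Q ℝ) : Prop where
  isSymm_left : A.IsSymm
  isSymm_right : B.IsSymm
  left_sq : A * A + N * Nᵀ = (a - μ) • A + (k - μ) • (1 : Matrix P P ℝ) + (μ - 1) • allOnes P P ℝ
  cross_sq : A * N + N * B = (a - μ) • N + μ • allOnes P Q ℝ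
  right_sq : Nᵀ * N + B * B = (a - μ) • B + (k - μ) • (1 : Matrix Q Q ℝ) + μ • allOnes Q Q ℝ
  row_sum_left (p : P) : ∑ p', A p p' = a
  row_sum_cross (p : P) : ∑ q, N p q = k - 1 - a
  col_sum_cross (q : Q) : ∑ p, N p q = μ
  row_sum_right (q : Q) : ∑ q', B q q' = k - μ
  card_left : (Fintype.card P : ℝ) = k
  trace_left : A.trace = 0
  trace_left_sq : (A * A).trace = k * a
  trace_right : B.trace = 0

namespace SubconstituentBlocks

variable {P Q R : Type*} [Fintype P] [Fintype Q] [DecidableEq P] [DecidableEq Q]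
  {A : Matrix P P ℝ} {N : Matrix P Q ℝ} {B : Matrix Q Q ℝ}

section General

variable {k a μ : ℝ}

lemma left_mul_allOnes (h : SubconstituentBlocks k a μ A N B) :
    A * allOnes P R ℝ = a • allOnes P R ℝ :=
  mul_allOnes_of_row_sum h.row_sum_left

lemma allOnes_mul_left (h : SubconstituentBlocks k a μ A N B) :
    allOnes R P ℝ * A = a • allOnes R P ℝ :=
  allOnes_mul_of_col_sum fun p => by simpa only [h.isSymm_left.apply] using h.row_sum_left p

lemma right_mul_allOnes (h : SubconstituentBlocks k a μ A N B) :
    B * allOnes Q R ℝ = (k - μ) • allOnes Q R ℝ :=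
  mul_allOnes_of_row_sum h.row_sum_right

lemma allOnes_mul_right (h : SubconstituentBlocks k a μ A N B) :
    allOnes R Q ℝ * B = (k - μ) • allOnes R Q ℝ :=
  allOnes_mul_of_col_sum fun q => by simpa only [h.isSymm_right.apply] using h.row_sum_right q

lemma cross_mul_allOnes (h : SubconstituentBlocks k a μ A N B) :
    N * allOnes Q R ℝ = (k - 1 - a) • allOnes P R ℝ :=
  mul_allOnes_of_row_sum h.row_sum_cross

lemma allOnes_mul_cross (h : SubconstituentBlocks k a μ A N B) :
    allOnes R P ℝ * N = μ • allOnes R Q ℝ :=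
  allOnes_mul_of_col_sum h.col_sum_cross

lemma transpose_cross_mul_allOnes (h : SubconstituentBlocks k a μ A N B) :
    Nᵀ * allOnes P R ℝ = μ • allOnes Q R ℝ :=
  mul_allOnes_of_row_sum h.col_sum_cross

lemma allOnes_mul_transpose_cross (h : SubconstituentBlocks k a μ A N B) :
    allOnes R Q ℝ * Nᵀ = (k - 1 - a) • allOnes R P ℝ :=
  allOnes_mul_of_col_sum h.row_sum_cross

lemma mul_card_right (h : SubconstituentBlocks k a μ A N B) :
    μ * Fintype.card Q = k * (k - 1 - a) := by
  have hsum : ∑ q, ∑ p, N p q = ∑ p, ∑ q, N p q := Finset.sum_comm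
  simp only [h.col_sum_cross, h.row_sum_cross, Finset.sum_const, Finset.card_univ, nsmul_eq_mul,
    h.card_left] at hsum
  rwa [mul_comm]

lemma trace_right_sq (h : SubconstituentBlocks k a μ A N B) :
    (B * B).trace = (k - μ) * Fintype.card Q := by
  have hleft := congrArg Matrix.trace h.left_sq
  have hright := congrArg Matrix.trace h.right_sq
  simp only [Matrix.trace_add, Matrix.trace_smul, trace_allOnes, Matrix.trace_one, smul_eq_mul,
    h.trace_left, h.trace_left_sq, h.trace_right, h.card_left] at hleft hright
  linear_combination hright - hleft - Matrix.trace_mul_comm Nᵀ N + h.mul_card_right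

end General

section GeneralizedQuadrangle

variable {s t : ℝ}

lemma card_right (h : SubconstituentBlocks (s * (t + 1)) (s - 1) (t + 1) A N B) (ht : 0 < t) :
    (Fintype.card Q : ℝ) = s ^ 2 * t := by
  have ht1 : t + 1 ≠ 0 := by positivity
  refine mul_left_cancel₀ ht1 ?_
  linear_combination h.mul_card_right

lemma cross_mul_transpose_cross
    (h : SubconstituentBlocks (s * (t + 1)) (s - 1) (t + 1) A N B) :
    N * Nᵀ = t • (allOnes P P ℝ + s • (1 : Matrix P P ℝ) - (A + 1))
      - ((A + 1) * (A + 1) - s • (A + 1)) := by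
  simp only [Matrix.add_mul, Matrix.mul_add, Matrix.one_mul, Matrix.mul_one]
  linear_combination (norm := module) h.left_sq

lemma allOnes_sub_mul_transpose_cross
    (h : SubconstituentBlocks (s * (t + 1)) (s - 1) (t + 1) A N B) :
    (allOnes P Q ℝ - (A + 1) * N) * Nᵀ
      = (A + 1) * ((A + 1) * (A + 1) - s • (A + 1)) + t • ((A + 1) * (A + 1) - s • (A + 1)) := by
  have hKJ : (A + 1) * allOnes P P ℝ = s • allOnes P P ℝ := by
    rw [Matrix.add_mul, h.left_mul_allOnes, Matrix.one_mul]
    module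
  rw [Matrix.sub_mul, Matrix.mul_assoc, h.cross_mul_transpose_cross, h.allOnes_mul_transpose_cross]
  simp only [Matrix.mul_sub (A + 1), Matrix.mul_smul, Matrix.mul_add (A + 1) (allOnes P P ℝ),
    Matrix.mul_one, hKJ]
  module

lemma allOnes_sub_mul_allOnes
    (h : SubconstituentBlocks (s * (t + 1)) (s - 1) (t + 1) A N B) (ht : 0 < t) :
    (allOnes P Q ℝ - (A + 1) * N) * allOnes Q P ℝ = 0 := by
  rw [Matrix.sub_mul, Matrix.mul_assoc, h.cross_mul_allOnes, Matrix.mul_smul, Matrix.add_mul,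
    h.left_mul_allOnes, Matrix.one_mul, allOnes_mul_allOnes, h.card_right ht]
  module

lemma allOnes_mul_allOnes_sub
    (h : SubconstituentBlocks (s * (t + 1)) (s - 1) (t + 1) A N B) :
    allOnes Q P ℝ * (allOnes P Q ℝ - (A + 1) * N) = 0 := by
  rw [Matrix.mul_sub, ← Matrix.mul_assoc, Matrix.mul_add, h.allOnes_mul_left, Matrix.mul_one,
    Matrix.add_mul, Matrix.smul_mul, h.allOnes_mul_cross, allOnes_mul_allOnes, h.card_left]
  module

lemma mul_cross_eq_allOnes_of_sq_eq_smul
    (h : SubconstituentBlocks (s * (t + 1)) (s - 1) (t + 1) A N B) (ht : 0 < t)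
    (hA : (A + 1) * (A + 1) = s • (A + 1)) : (A + 1) * N = allOnes P Q ℝ := by
  set D := allOnes P Q ℝ - (A + 1) * N with hD
  have hDN : D * Nᵀ = 0 := by
    rw [hD, h.allOnes_sub_mul_transpose_cross, hA, sub_self, Matrix.mul_zero, smul_zero, add_zero]
  have hDD : D * Dᵀ = 0 := by
    have hDT : Dᵀ = allOnes Q P ℝ - Nᵀ * (A + 1) := by
      simp [hD, Matrix.transpose_sub, Matrix.transpose_mul, h.isSymm_left.eq]
    rw [hDT, Matrix.mul_sub, ← Matrix.mul_assoc, hDN, h.allOnes_sub_mul_allOnes ht,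
      Matrix.zero_mul, sub_zero]
  exact (sub_eq_zero.1 (Matrix.self_mul_conjTranspose_eq_zero.1 hDD)).symm

lemma sq_eq_smul_of_mul_cross_eq_allOnes
    (h : SubconstituentBlocks (s * (t + 1)) (s - 1) (t + 1) A N B)
    (hN : (A + 1) * N = allOnes P Q ℝ) : (A + 1) * (A + 1) = s • (A + 1) := by
  set W := (A + 1) * (A + 1) - s • (A + 1) with hW
  have hKW : (A + 1) * W = -t • W := by
    have hDN := h.allOnes_sub_mul_transpose_cross
    rw [hN, sub_self, Matrix.zero_mul, ← hW] at hDN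
    linear_combination (norm := module) -hDN
  have hWW : W * W = (t ^ 2 + s * t) • W := by
    nth_rw 1 [hW]
    rw [Matrix.sub_mul, Matrix.mul_assoc, Matrix.smul_mul, hKW, Matrix.mul_smul, hKW]
    module
  have hWsymm : W.IsSymm := by
    simp [hW, Matrix.IsSymm, Matrix.transpose_mul, h.isSymm_left.eq]
  have htr : W.trace = 0 := by
    simp only [hW, Matrix.add_mul, Matrix.mul_add, Matrix.one_mul, Matrix.mul_one, smul_add,
      Matrix.trace_sub, Matrix.trace_add, Matrix.trace_smul, Matrix.trace_one, smul_eq_mul,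
      h.trace_left, h.trace_left_sq, h.card_left]
    ring
  refine sub_eq_zero.1 (eq_zero_of_isSymm_of_trace_mul_self_eq_zero hWsymm ?_)
  rw [hWW, Matrix.trace_smul, htr, smul_zero]

theorem sq_eq_smul_iff_mul_cross_eq_allOnes
    (h : SubconstituentBlocks (s * (t + 1)) (s - 1) (t + 1) A N B) (ht : 0 < t) :
    (A + 1) * (A + 1) = s • (A + 1) ↔ (A + 1) * N = allOnes P Q ℝ :=
  ⟨h.mul_cross_eq_allOnes_of_sq_eq_smul ht, h.sq_eq_smul_of_mul_cross_eq_allOnes⟩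

lemma cross_mul_right (h : SubconstituentBlocks (s * (t + 1)) (s - 1) (t + 1) A N B) :
    N * B = (s - t - 1) • N + t • allOnes P Q ℝ + (allOnes P Q ℝ - (A + 1) * N) := by
  rw [Matrix.add_mul, Matrix.one_mul]
  linear_combination (norm := module) h.cross_sq

/-- The polynomial whose roots are the eigenvalues, other than the valency, of the second
subconstituent of a generalized quadrangle of order `(s, t)`. -/
noncomputable def secondSubconstituentCubic (s t : ℝ) : ℝ[X] :=
  (X - C (s - 1)) * (X + C (t + 1)) * (X - C (s - t - 1))

lemma eval_secondSubconstituentCubic (s t x : ℝ) :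
    (secondSubconstituentCubic s t).eval x = (x - (s - 1)) * (x + (t + 1)) * (x - (s - t - 1)) := by
  simp [secondSubconstituentCubic]

/-- The eigenvalues of the second subconstituent of a generalized quadrangle of order `(s, t)`,
the valency first. -/
noncomputable def secondSubconstituentEigenvalues (s t : ℝ) : Finset ℝ :=
  {(t + 1) * (s - 1), s - 1, s - t - 1, -(t + 1)}

@[to_additive]
lemma prod_secondSubconstituentEigenvalues {M : Type*} [CommMonoid M] (hs : 1 < s) (ht : 0 < t)
    (f : ℝ → M) :
    ∏ x ∈ secondSubconstituentEigenvalues s t, f x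
      = f ((t + 1) * (s - 1)) * f (s - 1) * f (s - t - 1) * f (-(t + 1)) := by
  have hst : 0 < t * (s - 1) := mul_pos ht (sub_pos.2 hs)
  have hvalency : (t + 1) * (s - 1) ∉ ({s - 1, s - t - 1, -(t + 1)} : Finset ℝ) := by
    simp only [Finset.mem_insert, Finset.mem_singleton, not_or]
    refine ⟨ne_of_gt ?_, ne_of_gt ?_, ne_of_gt ?_⟩ <;> linarith
  have hsecond : s - 1 ∉ ({s - t - 1, -(t + 1)} : Finset ℝ) := by
    simp only [Finset.mem_insert, Finset.mem_singleton, not_or]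
    refine ⟨ne_of_gt ?_, ne_of_gt ?_⟩ <;> linarith
  have hthird : s - t - 1 ∉ ({-(t + 1)} : Finset ℝ) := by
    rw [Finset.mem_singleton]
    exact ne_of_gt (by linarith)
  rw [secondSubconstituentEigenvalues, Finset.prod_insert hvalency, Finset.prod_insert hsecond,
    Finset.prod_insert hthird, Finset.prod_singleton]
  simp only [mul_assoc]

lemma aeval_right_secondSubconstituentCubic
    (h : SubconstituentBlocks (s * (t + 1)) (s - 1) (t + 1) A N B) :
    aeval B (secondSubconstituentCubic s t)
      = (t * (t + 1) * (s - 1)) • allOnes Q Q ℝ - Nᵀ * (allOnes P Q ℝ - (A + 1) * N) := by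
  have hquad : (B - (s - 1) • (1 : Matrix Q Q ℝ)) * (B + (t + 1) • (1 : Matrix Q Q ℝ))
      = (t + 1) • allOnes Q Q ℝ - Nᵀ * N := by
    simp only [Matrix.sub_mul, Matrix.mul_add, Matrix.smul_mul, Matrix.mul_smul, Matrix.one_mul,
      Matrix.mul_one]
    linear_combination (norm := module) h.right_sq
  calc aeval B (secondSubconstituentCubic s t)
      = (B - (s - 1) • (1 : Matrix Q Q ℝ)) * (B + (t + 1) • (1 : Matrix Q Q ℝ))
          * (B - (s - t - 1) • (1 : Matrix Q Q ℝ)) := by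
        simp only [secondSubconstituentCubic, map_mul, map_sub, map_add, aeval_X, aeval_C,
          Algebra.algebraMap_eq_smul_one, add_smul, sub_smul]
    _ = (t + 1) • (allOnes Q Q ℝ * B) - ((s - t - 1) * (t + 1)) • allOnes Q Q ℝ
          - Nᵀ * (N * B - (s - t - 1) • N) := by
        rw [hquad]
        simp only [Matrix.sub_mul, Matrix.mul_sub, Matrix.smul_mul, Matrix.mul_smul,
          Matrix.mul_one, Matrix.mul_assoc]
        module
    _ = (t * (t + 1) * (s - 1)) • allOnes Q Q ℝ - Nᵀ * (allOnes P Q ℝ - (A + 1) * N) := by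
        rw [h.allOnes_mul_right, h.cross_mul_right, add_assoc, add_sub_cancel_left, Matrix.mul_add,
          Matrix.mul_smul, h.transpose_cross_mul_allOnes]
        module

theorem mul_cross_eq_allOnes_iff_aeval_cubic
    (h : SubconstituentBlocks (s * (t + 1)) (s - 1) (t + 1) A N B) :
    (A + 1) * N = allOnes P Q ℝ ↔
      aeval B (secondSubconstituentCubic s t) = (t * (t + 1) * (s - 1)) • allOnes Q Q ℝ := by
  rw [h.aeval_right_secondSubconstituentCubic, sub_eq_self]
  refine ⟨fun hN => by rw [hN, sub_self, Matrix.mul_zero], fun hND => ?_⟩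
  set D := allOnes P Q ℝ - (A + 1) * N with hD
  have hDT : Dᵀ = B * Nᵀ - (s - t - 1) • Nᵀ - t • allOnes Q P ℝ := by
    have hNB := congrArg Matrix.transpose h.cross_mul_right
    simp only [Matrix.transpose_mul, Matrix.transpose_add, Matrix.transpose_smul,
      transpose_allOnes, h.isSymm_right.eq, ← hD] at hNB
    rw [hNB]
    module
  have hJD : allOnes Q P ℝ * D = 0 := h.allOnes_mul_allOnes_sub
  have hDD : Dᵀ * D = 0 := by
    simp only [hDT, Matrix.sub_mul, Matrix.smul_mul, Matrix.mul_assoc, hND, hJD,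
      Matrix.mul_zero, smul_zero, sub_zero]
  exact (sub_eq_zero.1 (Matrix.conjTranspose_mul_self_eq_zero.1 hDD)).symm

lemma mem_eigenvalues_of_mem_roots_charpoly_right
    (h : SubconstituentBlocks (s * (t + 1)) (s - 1) (t + 1) A N B)
    (hB : aeval B (secondSubconstituentCubic s t) = (t * (t + 1) * (s - 1)) • allOnes Q Q ℝ)
    {x : ℝ} (hx : x ∈ B.charpoly.roots) : x ∈ secondSubconstituentEigenvalues s t := by
  have hann : aeval B (secondSubconstituentCubic s t * (X - C ((t + 1) * (s - 1)))) = 0 := by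
    simp only [mul_comm (secondSubconstituentCubic s t), map_mul, hB, map_sub, aeval_X, aeval_C,
      Algebra.algebraMap_eq_smul_one, Matrix.mul_smul, Matrix.sub_mul, h.right_mul_allOnes,
      Matrix.smul_mul, Matrix.one_mul]
    module
  have hroot := (isRoot_of_aeval_eq_zero hann (isRoot_of_mem_roots hx)).eq_zero
  simp only [eval_mul, eval_secondSubconstituentCubic, eval_sub, eval_X, eval_C, mul_eq_zero,
    sub_eq_zero, add_eq_zero_iff_eq_neg] at hroot
  simp only [secondSubconstituentEigenvalues, Finset.mem_insert, Finset.mem_singleton]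
  tauto

lemma multiplicities_of_traces {s t m₁ m₂ m₃ m₄ : ℝ} (hs : 1 < s) (ht : 0 < t)
    (h0 : m₁ + m₂ + m₃ + m₄ = s ^ 2 * t)
    (h1 : m₁ * ((t + 1) * (s - 1)) + m₂ * (s - 1) + m₃ * (s - t - 1) + m₄ * -(t + 1) = 0)
    (h2 : m₁ * ((t + 1) * (s - 1)) ^ 2 + m₂ * (s - 1) ^ 2 + m₃ * (s - t - 1) ^ 2
      + m₄ * (-(t + 1)) ^ 2 = s ^ 2 * t * ((t + 1) * (s - 1)))
    (h3 : m₁ * (t ^ 2 * s ^ 2 * (t + 1) * (s - 1)) = s ^ 2 * t * (t * (t + 1) * (s - 1))) :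
    m₁ = 1 ∧ m₂ * (s + t) = s ^ 2 * (t ^ 2 - 1) ∧ m₃ = (t + 1) * (s - 1) ∧
      m₄ * (s + t) = t * (s - 1) * (s ^ 2 - t) := by
  have hs0 : s ≠ 0 := by positivity
  have hcubic : t ^ 2 * s ^ 2 * (t + 1) * (s - 1) ≠ 0 :=
    mul_ne_zero (by positivity) (sub_pos.2 hs).ne'
  obtain rfl : m₁ = 1 := mul_right_cancel₀ hcubic (by linear_combination h3)
  refine ⟨rfl, mul_left_cancel₀ ht.ne' ?_, mul_left_cancel₀ (mul_ne_zero ht.ne' hs0) ?_,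
    mul_left_cancel₀ hs0 ?_⟩
  -- `h2`, `h1`, `h0` combine to the quadratic vanishing at two of the last three eigenvalues.
  · linear_combination h2 - ((s - t - 1) - (t + 1)) * h1 - (s - t - 1) * (t + 1) * h0
  · linear_combination -h2 + ((s - 1) - (t + 1)) * h1 + (s - 1) * (t + 1) * h0
  · linear_combination h2 - ((s - t - 1) + (s - 1)) * h1 + (s - t - 1) * (s - 1) * h0

lemma rootMultiplicity_charpoly_right
    (h : SubconstituentBlocks (s * (t + 1)) (s - 1) (t + 1) A N B) (hs : 1 < s) (ht : 0 < t)
    (hB : aeval B (secondSubconstituentCubic s t) = (t * (t + 1) * (s - 1)) • allOnes Q Q ℝ) :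
    (B.charpoly.rootMultiplicity ((t + 1) * (s - 1)) : ℝ) = 1 ∧
      B.charpoly.rootMultiplicity (s - 1) * (s + t) = s ^ 2 * (t ^ 2 - 1) ∧
      (B.charpoly.rootMultiplicity (s - t - 1) : ℝ) = (t + 1) * (s - 1) ∧
      B.charpoly.rootMultiplicity (-(t + 1)) * (s + t) = t * (s - 1) * (s ^ 2 - t) := by
  have htrace (q : ℝ[X]) := trace_aeval_eq_sum_rootMultiplicity h.isSymm_right
    (fun _ => h.mem_eigenvalues_of_mem_roots_charpoly_right hB) q
  simp only [sum_secondSubconstituentEigenvalues hs ht] at htrace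
  have h0 := htrace 1
  have h1 := htrace X
  have h2 := htrace (X ^ 2)
  have h3 := htrace (secondSubconstituentCubic s t)
  simp only [map_one, Matrix.trace_one, h.card_right ht, eval_one, mul_one] at h0
  simp only [aeval_X, h.trace_right, eval_X] at h1
  simp only [map_pow, aeval_X, pow_two B, h.trace_right_sq, h.card_right ht, eval_pow,
    eval_X] at h2
  simp only [hB, Matrix.trace_smul, trace_allOnes, h.card_right ht, smul_eq_mul,
    eval_secondSubconstituentCubic] at h3
  exact multiplicities_of_traces hs ht h0.symm h1.symm (by linear_combination -h2)
    (by linear_combination -h3)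

lemma charpoly_right_of_aeval_cubic
    (h : SubconstituentBlocks (s * (t + 1)) (s - 1) (t + 1) A N B) (hs : 1 < s) (ht : 0 < t)
    {m2 m3 m4 : ℕ} (hm2 : m2 * (s + t) = s ^ 2 * (t ^ 2 - 1)) (hm3 : (m3 : ℝ) = (t + 1) * (s - 1))
    (hm4 : m4 * (s + t) = t * (s - 1) * (s ^ 2 - t))
    (hB : aeval B (secondSubconstituentCubic s t) = (t * (t + 1) * (s - 1)) • allOnes Q Q ℝ) :
    B.charpoly = (X - C ((t + 1) * (s - 1))) * (X - C (s - 1)) ^ m2 * (X - C (s - t - 1)) ^ m3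
      * (X + C (t + 1)) ^ m4 := by
  obtain ⟨h₁, h₂, h₃, h₄⟩ := h.rootMultiplicity_charpoly_right hs ht hB
  have hst : s + t ≠ 0 := by positivity
  rw [← hm2, mul_left_inj' hst] at h₂
  rw [← hm3] at h₃
  rw [← hm4, mul_left_inj' hst] at h₄
  norm_cast at h₁ h₂ h₃ h₄
  rw [eq_prod_pow_rootMultiplicity
      (Matrix.isHermitian_iff_isSymm.2 h.isSymm_right).splits_charpoly B.charpoly_monic
      (fun _ => h.mem_eigenvalues_of_mem_roots_charpoly_right hB),
    prod_secondSubconstituentEigenvalues hs ht, h₁, h₂, h₃, h₄, pow_one, C_neg, sub_neg_eq_add]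

lemma aeval_cubic_of_charpoly_right
    (h : SubconstituentBlocks (s * (t + 1)) (s - 1) (t + 1) A N B) (ht : 0 < t) {m2 m3 m4 : ℕ}
    (hB : B.charpoly = (X - C ((t + 1) * (s - 1))) * (X - C (s - 1)) ^ m2
      * (X - C (s - t - 1)) ^ m3 * (X + C (t + 1)) ^ m4) :
    aeval B (secondSubconstituentCubic s t) = (t * (t + 1) * (s - 1)) • allOnes Q Q ℝ := by
  have hrow : B * allOnes Q Q ℝ = ((t + 1) * (s - 1)) • allOnes Q Q ℝ := by
    rw [h.right_mul_allOnes]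
    module
  refine aeval_eq_smul_allOnes_of_charpoly_eq h.isSymm_right hrow
    (hB.trans <| by rw [mul_assoc, mul_assoc]) (fun x hx => ?_) ?_
  · have hroot := (isRoot_of_mem_roots hx).eq_zero
    simp only [eval_mul, eval_pow, eval_sub, eval_add, eval_X, eval_C, mul_eq_zero] at hroot
    rw [IsRoot, eval_secondSubconstituentCubic]
    rcases hroot with hx | hx | hx <;> simp [eq_zero_of_pow_eq_zero hx]
  · rw [h.card_right ht, eval_secondSubconstituentCubic]
    ring

theorem aeval_cubic_iff_charpoly_right
    (h : SubconstituentBlocks (s * (t + 1)) (s - 1) (t + 1) A N B) (hs : 1 < s) (ht : 0 < t)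
    {m2 m3 m4 : ℕ} (hm2 : m2 * (s + t) = s ^ 2 * (t ^ 2 - 1)) (hm3 : (m3 : ℝ) = (t + 1) * (s - 1))
    (hm4 : m4 * (s + t) = t * (s - 1) * (s ^ 2 - t)) :
    aeval B (secondSubconstituentCubic s t) = (t * (t + 1) * (s - 1)) • allOnes Q Q ℝ ↔
      B.charpoly = (X - C ((t + 1) * (s - 1))) * (X - C (s - 1)) ^ m2 * (X - C (s - t - 1)) ^ m3
        * (X + C (t + 1)) ^ m4 :=
  ⟨h.charpoly_right_of_aeval_cubic hs ht hm2 hm3 hm4, h.aeval_cubic_of_charpoly_right ht⟩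

end GeneralizedQuadrangle

end SubconstituentBlocks

section CliqueUnion

variable {W : Type*}

/-- The graph is a disjoint union of cliques: being equal or adjacent is an equivalence relation. -/
def IsCliqueUnion (H : SimpleGraph W) : Prop :=
  Equivalence fun x y => x = y ∨ H.Adj x y

variable {H : SimpleGraph W} [DecidableRel H.Adj]

lemma adjMatrix_add_one_apply [DecidableEq W] (x y : W) :
    (H.adjMatrix ℝ + 1) x y = if x = y ∨ H.Adj x y then 1 else 0 := by
  by_cases hxy : x = y
  · simp [hxy]
  · simp [hxy]

variable [Fintype W] {d : ℕ}

lemma sum_adjMatrix_apply (H : SimpleGraph W) [DecidableRel H.Adj] {R : Type*}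
    [NonAssocSemiring R] (x : W) :
    ∑ y, H.adjMatrix R x y = H.degree x := by
  simpa [Matrix.mulVec, dotProduct] using
    H.adjMatrix_mulVec_const_apply (α := R) (a := 1) (v := x)

lemma IsCliqueUnion.adjMatrix_add_one_sq [DecidableEq W] (hU : IsCliqueUnion H)
    (hH : H.IsRegularOfDegree d) :
    (H.adjMatrix ℝ + 1) * (H.adjMatrix ℝ + 1) = ((d : ℝ) + 1) • (H.adjMatrix ℝ + 1) := by
  set K := H.adjMatrix ℝ + 1 with hK
  have hcol (y : W) : ∑ z, K z y = d + 1 := by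
    have hsymm (z : W) : K z y = K y z :=
      (((H.isSymm_adjMatrix (α := ℝ)).add Matrix.isSymm_one).apply y z)
    simp only [hsymm]
    simp only [hK, Matrix.add_apply, Finset.sum_add_distrib, sum_adjMatrix_apply, hH.degree_eq,
      Matrix.one_apply, Finset.sum_ite_eq, Finset.mem_univ, if_true]
  have hclass (x y z : W) : K x z * K z y = K x y * K z y := by
    simp only [hK, adjMatrix_add_one_apply]
    by_cases hzy : z = y ∨ H.Adj z y
    · have hiff : (x = z ∨ H.Adj x z) ↔ (x = y ∨ H.Adj x y) :=
        ⟨fun hxz => hU.trans hxz hzy, fun hxy => hU.trans hxy (hU.symm hzy)⟩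
      simp only [hiff]
    · simp only [hzy, if_false, mul_zero]
  ext x y
  simp only [Matrix.mul_apply, hclass, ← Finset.mul_sum, hcol, Matrix.smul_apply, smul_eq_mul]
  ring

lemma isCliqueUnion_of_adjMatrix_add_one_sq [DecidableEq W] {c : ℝ}
    (hsq : (H.adjMatrix ℝ + 1) * (H.adjMatrix ℝ + 1) = c • (H.adjMatrix ℝ + 1)) :
    IsCliqueUnion H := by
  refine ⟨fun x => .inl rfl, fun hxy => hxy.imp Eq.symm .symm, fun {x y z} hxy hyz => ?_⟩
  by_contra hxz
  have hentry := congrFun₂ hsq x z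
  simp only [Matrix.mul_apply, Matrix.smul_apply, adjMatrix_add_one_apply, if_neg hxz,
    smul_zero] at hentry
  rw [Finset.sum_eq_zero_iff_of_nonneg fun _ _ => by positivity] at hentry
  simpa [hxy, hyz] using hentry y (Finset.mem_univ y)

lemma ncard_setOf_eq_or_adj (hH : H.IsRegularOfDegree d) (u : W) :
    {w | w = u ∨ H.Adj w u}.ncard = d + 1 := by
  have hinsert : {w | w = u ∨ H.Adj w u} = insert u (H.neighborSet u) := by
    ext w
    simp [H.adj_comm w u]
  rw [hinsert, Set.ncard_insert_of_notMem (H.notMem_neighborSet_self), ← hH.degree_eq u,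
    ← H.card_neighborSet_eq_degree, Set.ncard_eq_toFinset_card', Set.toFinset_card]

lemma IsCliqueUnion.ncard_cliques_mul (hU : IsCliqueUnion H) (hH : H.IsRegularOfDegree d) :
    {S : Set W | ∃ u, S = {w | w = u ∨ H.Adj w u}}.ncard * (d + 1) = Fintype.card W := by
  set P := {S : Set W | ∃ u, S = {w | w = u ∨ H.Adj w u}}
  have hpart : Setoid.IsPartition P := Setoid.isPartition_classes (Setoid.mk _ hU)
  have hcard : ∀ S : P, (Set.univ ∩ (S : Set W)).ncard = d + 1 := by
    rintro ⟨_, u, rfl⟩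
    rw [Set.univ_inter, ncard_setOf_eq_or_adj hH]
  calc P.ncard * (d + 1) = ∑ᶠ S : P, (Set.univ ∩ (S : Set W)).ncard := by
        simp only [hcard, finsum_eq_sum_of_fintype, Finset.sum_const, Finset.card_univ,
          ← Nat.card_eq_fintype_card, Nat.card_coe_set_eq, smul_eq_mul]
    _ = Fintype.card W := by
        rw [← hpart.ncard_eq_finsum, Set.ncard_univ, Nat.card_eq_fintype_card]

theorem isCliqueUnion_iff_adjMatrix_add_one_sq [DecidableEq W] (hH : H.IsRegularOfDegree d) :
    IsCliqueUnion H ↔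
      (H.adjMatrix ℝ + 1) * (H.adjMatrix ℝ + 1) = ((d : ℝ) + 1) • (H.adjMatrix ℝ + 1) :=
  ⟨fun hU => hU.adjMatrix_add_one_sq hH, isCliqueUnion_of_adjMatrix_add_one_sq⟩

theorem isCliqueUnion_and_ncard_iff {m : ℕ} (hH : H.IsRegularOfDegree d)
    (hcard : Fintype.card W = m * (d + 1)) :
    (IsCliqueUnion H ∧ (∀ u, {w | w = u ∨ H.Adj w u}.ncard = d + 1) ∧
      {S : Set W | ∃ u, S = {w | w = u ∨ H.Adj w u}}.ncard = m) ↔ IsCliqueUnion H :=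
  ⟨And.left, fun hU => ⟨hU, ncard_setOf_eq_or_adj hH,
    Nat.eq_of_mul_eq_mul_right d.succ_pos ((hU.ncard_cliques_mul hH).trans hcard)⟩⟩

end CliqueUnion

section Subconstituents

variable {V : Type*}

/-- The vertices at distance at least two from `v`, which carry the second subconstituent. -/
abbrev nonNeighborSet (G : SimpleGraph V) (v : V) : Set V := {x | x ≠ v ∧ ¬ G.Adj v x}

/-- The first subconstituent of `G` at `v`: the subgraph induced on the neighbours of `v`. -/
abbrev firstSubconstituent (G : SimpleGraph V) (v : V) : SimpleGraph (G.neighborSet v) :=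
  G.induce (G.neighborSet v)

/-- The second subconstituent of `G` at `v`: the subgraph induced on the vertices distinct from `v`
and not adjacent to it. -/
abbrev secondSubconstituent (G : SimpleGraph V) (v : V) : SimpleGraph (nonNeighborSet G v) :=
  G.induce (nonNeighborSet G v)

/-- The block of the adjacency matrix of `G` that joins the first subconstituent at `v` to the
second one. -/
noncomputable def crossAdjMatrix (G : SimpleGraph V) (v : V) :
    Matrix (G.neighborSet v) (nonNeighborSet G v) ℝ :=
  (G.adjMatrix ℝ).submatrix (↑) (↑)

variable {G : SimpleGraph V} {v : V}

lemma adjMatrix_apply_symm (x y : V) : G.adjMatrix ℝ x y = G.adjMatrix ℝ y x :=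
  G.isSymm_adjMatrix.apply y x

lemma adjMatrix_apply_neighborSet (p : G.neighborSet v) : G.adjMatrix ℝ p v = 1 := by
  rw [SimpleGraph.adjMatrix_apply, if_pos p.2.symm]

lemma adjMatrix_apply_nonNeighborSet (q : nonNeighborSet G v) : G.adjMatrix ℝ q v = 0 := by
  rw [SimpleGraph.adjMatrix_apply, if_neg fun hadj => q.2.2 hadj.symm]

lemma adjMatrix_firstSubconstituent_apply (p p' : G.neighborSet v) :
    (firstSubconstituent G v).adjMatrix ℝ p p' = G.adjMatrix ℝ p p' := rfl

lemma adjMatrix_secondSubconstituent_apply (q q' : nonNeighborSet G v) :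
    (secondSubconstituent G v).adjMatrix ℝ q q' = G.adjMatrix ℝ q q' := rfl

lemma crossAdjMatrix_apply (p : G.neighborSet v) (q : nonNeighborSet G v) :
    crossAdjMatrix G v p q = G.adjMatrix ℝ p q := rfl

variable [Fintype V] {n k a μ : ℕ}

lemma sum_eq_add_sum_neighborSet_add_sum_nonNeighborSet {M : Type*} [AddCommMonoid M]
    (G : SimpleGraph V) (v : V) (f : V → M) :
    ∑ x, f x = f v + ∑ p : G.neighborSet v, f p + ∑ q : nonNeighborSet G v, f q := by
  have hcompl : ∑ q : nonNeighborSet G v, f q = ∑ x with x ∉ insert v (G.neighborFinset v), f x :=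
    (Finset.sum_subtype _ (by simp) f).symm
  have hnbr : ∑ p : G.neighborSet v, f p = ∑ x ∈ G.neighborFinset v, f x :=
    (Finset.sum_subtype _ (by simp) f).symm
  rw [hcompl, hnbr, ← Finset.sum_insert (by simp),
    ← Finset.sum_filter_add_sum_filter_not _ (· ∈ insert v (G.neighborFinset v)),
    Finset.filter_univ_mem]

lemma sum_adjMatrix_mul_adjMatrix (hG : G.IsSRGWith n k a μ) (x y : V) :
    ∑ z, G.adjMatrix ℝ x z * G.adjMatrix ℝ z y =
      ((a : ℝ) - μ) * G.adjMatrix ℝ x y + ((k : ℝ) - μ) * (if x = y then 1 else 0) + μ := by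
  have hentry := congrFun₂ (hG.matrix_eq (α := ℝ)) x y
  rw [pow_two, Matrix.mul_apply] at hentry
  rw [hentry]
  simp only [Matrix.add_apply, Matrix.smul_apply, Matrix.one_apply, SimpleGraph.adjMatrix_apply,
    SimpleGraph.compl_adj]
  by_cases hxy : x = y
  · simp [hxy]
  · by_cases hadj : G.Adj x y <;> simp [hxy, hadj]

lemma sum_adjMatrix_mul_adjMatrix_eq_blocks (v x y : V) :
    ∑ z, G.adjMatrix ℝ x z * G.adjMatrix ℝ z y =
      G.adjMatrix ℝ x v * G.adjMatrix ℝ y v +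
        ∑ p : G.neighborSet v, G.adjMatrix ℝ x p * G.adjMatrix ℝ p y +
        ∑ q : nonNeighborSet G v, G.adjMatrix ℝ x q * G.adjMatrix ℝ q y := by
  rw [sum_eq_add_sum_neighborSet_add_sum_nonNeighborSet G v, adjMatrix_apply_symm v y]

lemma card_neighborSet (hG : G.IsSRGWith n k a μ) : Fintype.card (G.neighborSet v) = k := by
  rw [G.card_neighborSet_eq_degree, hG.regular.degree_eq]

lemma sum_neighborSet_adjMatrix (hG : G.IsSRGWith n k a μ) (v x : V) :
    ∑ p : G.neighborSet v, G.adjMatrix ℝ x p =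
      ((a : ℝ) - μ) * G.adjMatrix ℝ x v + ((k : ℝ) - μ) * (if x = v then 1 else 0) + μ := by
  rw [← sum_adjMatrix_mul_adjMatrix hG x v, sum_adjMatrix_mul_adjMatrix_eq_blocks v]
  have hdiag : G.adjMatrix ℝ v v = 0 := by simp
  simp only [hdiag, adjMatrix_apply_neighborSet, adjMatrix_apply_nonNeighborSet, mul_one, mul_zero,
    Finset.sum_const_zero, zero_add, add_zero]

lemma sum_nonNeighborSet_adjMatrix (hG : G.IsSRGWith n k a μ) (v x : V) :
    ∑ q : nonNeighborSet G v, G.adjMatrix ℝ x q =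
      k - G.adjMatrix ℝ x v - ∑ p : G.neighborSet v, G.adjMatrix ℝ x p := by
  have hrow := sum_adjMatrix_apply G (R := ℝ) x
  rw [sum_eq_add_sum_neighborSet_add_sum_nonNeighborSet G v, hG.regular.degree_eq] at hrow
  linarith

lemma sum_neighborSet_adjMatrix_of_neighborSet (hG : G.IsSRGWith n k a μ) (p : G.neighborSet v) :
    ∑ p' : G.neighborSet v, G.adjMatrix ℝ p p' = a := by
  rw [sum_neighborSet_adjMatrix hG, adjMatrix_apply_neighborSet, if_neg (G.ne_of_adj p.2).symm]
  ring

lemma sum_neighborSet_adjMatrix_of_nonNeighborSet (hG : G.IsSRGWith n k a μ)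
    (q : nonNeighborSet G v) : ∑ p : G.neighborSet v, G.adjMatrix ℝ q p = μ := by
  rw [sum_neighborSet_adjMatrix hG, adjMatrix_apply_nonNeighborSet, if_neg q.2.1]
  ring

lemma isRegularOfDegree_firstSubconstituent (hG : G.IsSRGWith n k a μ) :
    (firstSubconstituent G v).IsRegularOfDegree a := fun p => by
  have hsum := sum_neighborSet_adjMatrix_of_neighborSet hG p
  simp only [← adjMatrix_firstSubconstituent_apply, sum_adjMatrix_apply] at hsum
  exact_mod_cast hsum

lemma trace_adjMatrix_firstSubconstituent_sq (hG : G.IsSRGWith n k a μ) :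
    ((firstSubconstituent G v).adjMatrix ℝ * (firstSubconstituent G v).adjMatrix ℝ).trace =
      k * a := by
  simp only [Matrix.trace, Matrix.diag_apply, SimpleGraph.adjMatrix_mul_self_apply_self,
    (isRegularOfDegree_firstSubconstituent hG).degree_eq, Finset.sum_const, Finset.card_univ,
    card_neighborSet hG, nsmul_eq_mul]

lemma adjMatrix_firstSubconstituent_sq_add (hG : G.IsSRGWith n k a μ) :
    (firstSubconstituent G v).adjMatrix ℝ * (firstSubconstituent G v).adjMatrix ℝ +
        crossAdjMatrix G v * (crossAdjMatrix G v)ᵀ =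
      ((a : ℝ) - μ) • (firstSubconstituent G v).adjMatrix ℝ +
        ((k : ℝ) - μ) • (1 : Matrix (G.neighborSet v) (G.neighborSet v) ℝ) +
        ((μ : ℝ) - 1) • allOnes (G.neighborSet v) (G.neighborSet v) ℝ := by
  ext x y
  have hentry := sum_adjMatrix_mul_adjMatrix hG (x : V) y
  have hsymm (q : nonNeighborSet G v) : G.adjMatrix ℝ q y = G.adjMatrix ℝ y q :=
    adjMatrix_apply_symm _ _
  simp only [sum_adjMatrix_mul_adjMatrix_eq_blocks v, adjMatrix_apply_neighborSet, hsymm,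
    ← Subtype.ext_iff] at hentry
  simp only [Matrix.add_apply, Matrix.smul_apply, Matrix.mul_apply, Matrix.transpose_apply,
    Matrix.one_apply, smul_eq_mul, allOnes_apply, crossAdjMatrix_apply,
    adjMatrix_firstSubconstituent_apply]
  linarith

lemma adjMatrix_mul_crossAdjMatrix_add (hG : G.IsSRGWith n k a μ) :
    (firstSubconstituent G v).adjMatrix ℝ * crossAdjMatrix G v +
        crossAdjMatrix G v * (secondSubconstituent G v).adjMatrix ℝ =
      ((a : ℝ) - μ) • crossAdjMatrix G v +
        (μ : ℝ) • allOnes (G.neighborSet v) (nonNeighborSet G v) ℝ := by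
  ext x y
  have hne : (x : V) ≠ y := fun heq => y.2.2 (heq ▸ x.2)
  have hentry := sum_adjMatrix_mul_adjMatrix hG (x : V) y
  simp only [sum_adjMatrix_mul_adjMatrix_eq_blocks v, adjMatrix_apply_nonNeighborSet,
    if_neg hne] at hentry
  simp only [Matrix.add_apply, Matrix.smul_apply, Matrix.mul_apply, smul_eq_mul, allOnes_apply,
    crossAdjMatrix_apply, adjMatrix_firstSubconstituent_apply,
    adjMatrix_secondSubconstituent_apply]
  linarith

lemma transpose_crossAdjMatrix_mul_add (hG : G.IsSRGWith n k a μ) :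
    (crossAdjMatrix G v)ᵀ * crossAdjMatrix G v +
        (secondSubconstituent G v).adjMatrix ℝ * (secondSubconstituent G v).adjMatrix ℝ =
      ((a : ℝ) - μ) • (secondSubconstituent G v).adjMatrix ℝ +
        ((k : ℝ) - μ) • (1 : Matrix (nonNeighborSet G v) (nonNeighborSet G v) ℝ) +
        (μ : ℝ) • allOnes (nonNeighborSet G v) (nonNeighborSet G v) ℝ := by
  ext x y
  have hentry := sum_adjMatrix_mul_adjMatrix hG (x : V) y
  have hsymm (p : G.neighborSet v) : G.adjMatrix ℝ x p = G.adjMatrix ℝ p x :=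
    adjMatrix_apply_symm _ _
  simp only [sum_adjMatrix_mul_adjMatrix_eq_blocks v, adjMatrix_apply_nonNeighborSet,
    hsymm, ← Subtype.ext_iff] at hentry
  simp only [Matrix.add_apply, Matrix.smul_apply, Matrix.mul_apply, Matrix.transpose_apply,
    Matrix.one_apply, smul_eq_mul, allOnes_apply, crossAdjMatrix_apply,
    adjMatrix_secondSubconstituent_apply]
  linarith

theorem subconstituentBlocks (hG : G.IsSRGWith n k a μ) (v : V) :
    SubconstituentBlocks (k : ℝ) a μ ((firstSubconstituent G v).adjMatrix ℝ) (crossAdjMatrix G v)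
      ((secondSubconstituent G v).adjMatrix ℝ) where
  isSymm_left := SimpleGraph.isSymm_adjMatrix _
  isSymm_right := SimpleGraph.isSymm_adjMatrix _
  left_sq := adjMatrix_firstSubconstituent_sq_add hG
  cross_sq := adjMatrix_mul_crossAdjMatrix_add hG
  right_sq := transpose_crossAdjMatrix_mul_add hG
  row_sum_left := sum_neighborSet_adjMatrix_of_neighborSet hG
  row_sum_cross p := by
    simp only [crossAdjMatrix_apply]
    rw [sum_nonNeighborSet_adjMatrix hG, sum_neighborSet_adjMatrix_of_neighborSet hG,
      adjMatrix_apply_neighborSet]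
  col_sum_cross q := by
    simpa only [crossAdjMatrix_apply, adjMatrix_apply_symm (q : V)] using
      sum_neighborSet_adjMatrix_of_nonNeighborSet hG q
  row_sum_right q := by
    simp only [adjMatrix_secondSubconstituent_apply]
    rw [sum_nonNeighborSet_adjMatrix hG, sum_neighborSet_adjMatrix_of_nonNeighborSet hG,
      adjMatrix_apply_nonNeighborSet, sub_zero]
  card_left := by rw [card_neighborSet hG]
  trace_left := SimpleGraph.trace_adjMatrix _ _
  trace_left_sq := trace_adjMatrix_firstSubconstituent_sq hG
  trace_right := SimpleGraph.trace_adjMatrix _ _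

end Subconstituents

lemma map_adjMatrix {V R S : Type*} [NonAssocSemiring R] [NonAssocSemiring S] (H : SimpleGraph V)
    [DecidableRel H.Adj] (f : R →+* S) : (H.adjMatrix R).map f = H.adjMatrix S := by
  ext x y
  simp only [Matrix.map_apply, SimpleGraph.adjMatrix_apply, apply_ite f, map_one, map_zero]

lemma charpoly_adjMatrix_eq_iff_map {V K L : Type*} [Fintype V] [DecidableEq V] [Field K]
    [CommRing L] [Nontrivial L] [Algebra K L] (H : SimpleGraph V) [DecidableRel H.Adj] (p : K[X]) :
    (H.adjMatrix K).charpoly = p ↔ (H.adjMatrix L).charpoly = p.map (algebraMap K L) := by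
  rw [← map_adjMatrix H (algebraMap K L), Matrix.charpoly_map,
    (Polynomial.map_injective _ (algebraMap K L).injective).eq_iff]

theorem firstSubconstituent_cliques_iff_charpoly_general {V : Type*} [Fintype V]
    (s t : ℕ) (hs : 1 < s) (ht : 0 < t) (G : SimpleGraph V)
    (hG : G.IsSRGWith ((s + 1) * (s * t + 1)) (s * (t + 1)) (s - 1) (t + 1))
    (v : V) (m2 m4 : ℕ)
    (hm2 : (m2 : ℚ) * (s + t) = s ^ 2 * (t ^ 2 - 1))
    (hm4 : (m4 : ℚ) * (s + t) = t * (s - 1) * (s ^ 2 - t)) :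
    (Equivalence (fun x y : G.neighborSet v => x = y ∨ G.Adj ↑x ↑y) ∧
      (∀ u : G.neighborSet v,
        {w : G.neighborSet v | w = u ∨ G.Adj ↑w ↑u}.ncard = s) ∧
      {S : Set (G.neighborSet v) |
        ∃ u : G.neighborSet v, S = {w | w = u ∨ G.Adj ↑w ↑u}}.ncard = t + 1)
    ↔
    Matrix.charpoly ((G.induce {x : V | x ≠ v ∧ ¬ G.Adj v x}).adjMatrix ℚ) =
      (X - C (((t : ℚ) + 1) * ((s : ℚ) - 1))) *
      (X - C ((s : ℚ) - 1)) ^ m2 *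
      (X - C ((s : ℚ) - (t : ℚ) - 1)) ^ ((t + 1) * (s - 1)) *
      (X + C ((t : ℚ) + 1)) ^ m4 := by
  obtain ⟨d, rfl⟩ : ∃ d, s = d + 1 := ⟨s - 1, by lia⟩
  have hreg : (firstSubconstituent G v).IsRegularOfDegree d :=
    isRegularOfDegree_firstSubconstituent hG
  have hcard : Fintype.card (G.neighborSet v) = (t + 1) * (d + 1) := by
    rw [card_neighborSet hG, mul_comm]
  let A := (firstSubconstituent G v).adjMatrix ℝ
  let N := crossAdjMatrix G v
  let B := (secondSubconstituent G v).adjMatrix ℝ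
  have hblocks : SubconstituentBlocks (((d + 1 : ℕ) : ℝ) * (t + 1)) ((d + 1 : ℕ) - 1) (t + 1)
      A N B := by
    simpa using subconstituentBlocks hG v
  calc _ ↔ IsCliqueUnion (firstSubconstituent G v) := isCliqueUnion_and_ncard_iff hreg hcard
    _ ↔ (A + 1) * (A + 1) = ((d + 1 : ℕ) : ℝ) • (A + 1) := by
      simpa only [Nat.cast_succ] using isCliqueUnion_iff_adjMatrix_add_one_sq hreg
    _ ↔ (A + 1) * N = allOnes _ _ ℝ :=
      hblocks.sq_eq_smul_iff_mul_cross_eq_allOnes (Nat.cast_pos.2 ht)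
    _ ↔ aeval B (SubconstituentBlocks.secondSubconstituentCubic (d + 1 : ℕ) t) =
          (t * (t + 1) * ((d + 1 : ℕ) - 1) : ℝ) • allOnes _ _ ℝ :=
      hblocks.mul_cross_eq_allOnes_iff_aeval_cubic
    _ ↔ _ := hblocks.aeval_cubic_iff_charpoly_right (Nat.one_lt_cast.2 hs) (Nat.cast_pos.2 ht)
      (m2 := m2) (m3 := (t + 1) * d) (m4 := m4) (by exact_mod_cast hm2) (by push_cast; ring)
      (by exact_mod_cast hm4)
    _ ↔ _ := by simp [B, charpoly_adjMatrix_eq_iff_map (L := ℝ)]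

/-- Lemma on the spectrum of the second subconstituent. Let `s ≥ t ≥ 2` and
let `Γ` be strongly regular with parameters `((s+1)(st+1), s(t+1), s−1, t+1)` and `v` a
vertex. Let `C` be the first subconstituent (induced on `N(v)`) and `B` the second
subconstituent. With `m₂(s+t) = s²(t²−1)` and `m₄(s+t) = t(s−1)(s²−t)`, the graph `C` is a
disjoint union of `t+1` cliques of size `s` iff the characteristic polynomial of the
adjacency matrix of `B` is
`(X−(t+1)(s−1)) (X−(s−1))^{m₂} (X−(s−t−1))^{(t+1)(s−1)} (X+(t+1))^{m₄}`. -/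
theorem firstSubconstituent_cliques_iff_charpoly {V : Type} [Fintype V]
    (s t : ℕ) (hts : t ≤ s) (ht : 2 ≤ t) (G : SimpleGraph V)
    (hG : G.IsSRGWith ((s + 1) * (s * t + 1)) (s * (t + 1)) (s - 1) (t + 1))
    (v : V) (m2 m4 : ℕ)
    (hm2 : m2 * (s + t) = s ^ 2 * (t ^ 2 - 1))
    (hm4 : m4 * (s + t) = t * (s - 1) * (s ^ 2 - t)) :
    (Equivalence (fun x y : G.neighborSet v => x = y ∨ G.Adj ↑x ↑y) ∧
      (∀ u : G.neighborSet v,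
        {w : G.neighborSet v | w = u ∨ G.Adj ↑w ↑u}.ncard = s) ∧
      {S : Set (G.neighborSet v) |
        ∃ u : G.neighborSet v, S = {w | w = u ∨ G.Adj ↑w ↑u}}.ncard = t + 1)
    ↔
    Matrix.charpoly ((G.induce {x : V | x ≠ v ∧ ¬ G.Adj v x}).adjMatrix ℚ) =
      (X - C (((t : ℚ) + 1) * ((s : ℚ) - 1))) *
      (X - C ((s : ℚ) - 1)) ^ m2 *
      (X - C ((s : ℚ) - (t : ℚ) - 1)) ^ ((t + 1) * (s - 1)) *
      (X + C ((t : ℚ) + 1)) ^ m4 := by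
  have ht2 : 1 ≤ t ^ 2 := Nat.one_le_pow _ _ (by lia)
  have hts2 : t ≤ s ^ 2 := hts.trans (Nat.le_self_pow two_ne_zero s)
  have hs : 1 ≤ s := by lia
  exact firstSubconstituent_cliques_iff_charpoly_general s t (by lia) (by lia) G hG v m2 m4
    (by exact_mod_cast congrArg (Nat.cast : ℕ → ℚ) hm2)
    (by exact_mod_cast congrArg (Nat.cast : ℕ → ℚ) hm4)
end

section
/- Let s ≥ t ≥ 2, let Γ be a strongly regular graph with parameters ((s+1)(st+1), s(t+1), s−1, t+1), and let v be a regular point of Γ. Let u, w ∈ N(v) be non-adjacent. Then u and w have exactly t+1 common neighbours, one of which is v; every common neighbour x ≠ v of u and w satisfies x ∉ N(v); and any two common neighbours x, y ≠ v of u and w lie in a common fibre, i.e., N(v) ∩ N(x) = N(v) ∩ N(y). -/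
open scoped Classical

/-- For a graph `G` and a set `X` of vertices, `X^⊥` is the set of vertices `w` such that
for every `x ∈ X`, either `w = x` or `w` is adjacent to `x`. -/
def perp {V : Type*} (G : SimpleGraph V) (X : Set V) : Set V :=
  {w | ∀ x ∈ X, w = x ∨ G.Adj w x}

/-- A vertex `v` of a strongly regular graph with parameters
`((s+1)(st+1), s(t+1), s−1, t+1)` is a regular point if (i) the subgraph induced on `N(v)`
is a disjoint union of cliques, and (ii) for every vertex `x ≠ v` not adjacent to `v`, the
span `{v,x}^{⊥⊥}` has exactly `t + 1` elements and is a coclique. -/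
def IsRegularPoint {V : Type*} (G : SimpleGraph V) (t : ℕ) (v : V) : Prop :=
  Equivalence (fun x y : G.neighborSet v => x = y ∨ G.Adj ↑x ↑y) ∧
  ∀ x : V, x ≠ v → ¬ G.Adj v x →
    (perp G (perp G {v, x})).ncard = t + 1 ∧
    ∀ y ∈ perp G (perp G {v, x}), ∀ z ∈ perp G (perp G {v, x}), ¬ G.Adj y z

/-!
For non-adjacent `u`, `w` in `N(v)`, the transitivity of "equal or adjacent" on `N(v)` keeps every
common neighbour `x ≠ v` of `u` and `w` out of `N(v)`. Then `{u, w} ⊆ {v, x}^⊥`, so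
`{v, x}^⊥⊥ ⊆ {u, w}^⊥ = N(u) ∩ N(w)`, and both ends have `t + 1` elements. Taking `⊥` once more,
`N(v) ∩ N(x) = {v, x}^⊥ = {v, x}^⊥⊥⊥ = (N(u) ∩ N(w))^⊥`, which does not depend on `x`.
-/

section Perp

variable {V : Type*} {G : SimpleGraph V}

theorem subset_perp_comm {X Y : Set V} : X ⊆ perp G Y ↔ Y ⊆ perp G X := by
  have swap {X Y : Set V} (h : X ⊆ perp G Y) : Y ⊆ perp G X := fun y hy x hx ↦
    (h hx y hy).imp Eq.symm SimpleGraph.Adj.symm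
  exact ⟨swap, swap⟩

theorem perp_anti {X Y : Set V} (h : X ⊆ Y) : perp G Y ⊆ perp G X :=
  fun _ hw x hx ↦ hw x (h hx)

theorem subset_perp_perp (X : Set V) : X ⊆ perp G (perp G X) :=
  subset_perp_comm.mp subset_rfl

theorem perp_perp_perp (X : Set V) : perp G (perp G (perp G X)) = perp G X :=
  (perp_anti (subset_perp_perp X)).antisymm (subset_perp_perp (perp G X))

theorem commonNeighbors_subset_perp_pair (x y : V) : G.commonNeighbors x y ⊆ perp G {x, y} := by
  rintro w ⟨hxw, hyw⟩ z (rfl | rfl)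
  exacts [.inr hxw.symm, .inr hyw.symm]

theorem perp_pair_eq_commonNeighbors {x y : V} (hne : x ≠ y) (hxy : ¬G.Adj x y) :
    perp G {x, y} = G.commonNeighbors x y := by
  refine Set.Subset.antisymm (fun w hw ↦ ?_) (commonNeighbors_subset_perp_pair x y)
  rcases hw x (by simp) with rfl | hwx <;> rcases hw y (by simp) with rfl | hwy
  exacts [(hne rfl).elim, (hxy hwy).elim, (hxy hwx.symm).elim, ⟨hwx.symm, hwy.symm⟩]

end Perp

section CommonNeighbors

variable {V : Type*} {G : SimpleGraph V} {t : ℕ} {u v w x : V}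

theorem ncard_commonNeighbors_of_not_adj [Fintype V] [DecidableRel G.Adj]
    {n k l m : ℕ} (hG : G.IsSRGWith n k l m) (hne : u ≠ w) (huw : ¬G.Adj u w) :
    (G.commonNeighbors u w).ncard = m := by
  rw [← hG.of_not_adj hne huw, Set.ncard_eq_toFinset_card', Set.toFinset_card]

theorem not_adj_of_mem_commonNeighbors
    (hcliques : Equivalence fun a b : G.neighborSet v ↦ a = b ∨ G.Adj ↑a ↑b)
    (hu : G.Adj v u) (hw : G.Adj v w) (hne : u ≠ w) (huw : ¬G.Adj u w)
    (hx : x ∈ G.commonNeighbors u w) : ¬G.Adj v x := by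
  intro hvx
  have h : (⟨u, hu⟩ : G.neighborSet v) = ⟨w, hw⟩ ∨ G.Adj u w :=
    hcliques.trans (y := ⟨x, hvx⟩) (.inr hx.1) (.inr hx.2.symm)
  exact h.elim (fun heq ↦ hne (congrArg Subtype.val heq)) huw

theorem span_pair_eq_commonNeighbors (hne : u ≠ w) (huw : ¬G.Adj u w)
    (hfin : (G.commonNeighbors u w).Finite)
    (hle : (G.commonNeighbors u w).ncard ≤ (perp G (perp G {v, x})).ncard)
    (hv : v ∈ G.commonNeighbors u w) (hx : x ∈ G.commonNeighbors u w) :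
    perp G (perp G {v, x}) = G.commonNeighbors u w := by
  have hperp : perp G {u, w} = G.commonNeighbors u w := perp_pair_eq_commonNeighbors hne huw
  have hpair : {u, w} ⊆ perp G {v, x} :=
    subset_perp_comm.mp (hperp ▸ Set.pair_subset hv hx)
  have hsub : perp G (perp G {v, x}) ⊆ G.commonNeighbors u w := hperp ▸ perp_anti hpair
  exact Set.eq_of_subset_of_ncard_le hsub hle hfin

theorem common_neighbors_in_first_subconstituent_general
    (hcliques : Equivalence fun a b : G.neighborSet v ↦ a = b ∨ G.Adj ↑a ↑b)
    (hspan : ∀ x, x ≠ v → ¬G.Adj v x → (perp G (perp G {v, x})).ncard = t + 1)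
    (hu : u ∈ G.neighborSet v) (hw : w ∈ G.neighborSet v) (hne : u ≠ w) (huw : ¬G.Adj u w)
    (hcard : (G.commonNeighbors u w).ncard = t + 1) :
    v ∈ G.commonNeighbors u w ∧
    (∀ x ∈ G.commonNeighbors u w, x ≠ v → x ∉ G.neighborSet v) ∧
    ∀ x ∈ G.commonNeighbors u w, ∀ y ∈ G.commonNeighbors u w, x ≠ v → y ≠ v →
      G.neighborSet v ∩ G.neighborSet x = G.neighborSet v ∩ G.neighborSet y := by
  have hv : v ∈ G.commonNeighbors u w := ⟨hu.symm, hw.symm⟩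
  have hout {x : V} (hx : x ∈ G.commonNeighbors u w) : ¬G.Adj v x :=
    not_adj_of_mem_commonNeighbors hcliques hu hw hne huw hx
  have hspan_eq {x : V} (hx : x ∈ G.commonNeighbors u w) (hxv : x ≠ v) :
      perp G (perp G {v, x}) = G.commonNeighbors u w :=
    span_pair_eq_commonNeighbors hne huw (Set.finite_of_ncard_ne_zero (by omega))
      (hcard.trans (hspan x hxv (hout hx)).symm).le hv hx
  have hfibre {x : V} (hx : x ∈ G.commonNeighbors u w) (hxv : x ≠ v) :
      G.neighborSet v ∩ G.neighborSet x = perp G (G.commonNeighbors u w) :=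
    calc G.neighborSet v ∩ G.neighborSet x
      _ = perp G {v, x} := (perp_pair_eq_commonNeighbors hxv.symm (hout hx)).symm
      _ = perp G (perp G (perp G {v, x})) := (perp_perp_perp _).symm
      _ = perp G (G.commonNeighbors u w) := by rw [hspan_eq hx hxv]
  exact ⟨hv, fun _ hx _ ↦ hout hx,
    fun _ hx _ hy hxv hyv ↦ (hfibre hx hxv).trans (hfibre hy hyv).symm⟩

end CommonNeighbors

/-- Let `s ≥ t ≥ 2`, `Γ` strongly regular with parameters
`((s+1)(st+1), s(t+1), s−1, t+1)`, `v` a regular point, and `u, w ∈ N(v)` non-adjacent.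
Then `u` and `w` have exactly `t + 1` common neighbours, one of which is `v`; every common
neighbour `x ≠ v` lies outside `N(v)`; and any two common neighbours `x, y ≠ v` lie in a
common fibre, i.e. `N(v) ∩ N(x) = N(v) ∩ N(y)`. -/
theorem common_neighbors_in_first_subconstituent {V : Type} [Fintype V]
    (s t : ℕ) (hts : t ≤ s) (ht : 2 ≤ t) (G : SimpleGraph V)
    (hG : G.IsSRGWith ((s + 1) * (s * t + 1)) (s * (t + 1)) (s - 1) (t + 1))
    (v : V) (hreg : IsRegularPoint G t v)
    (u w : V) (hu : u ∈ G.neighborSet v) (hw : w ∈ G.neighborSet v)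
    (huw : u ≠ w) (hnadj : ¬ G.Adj u w) :
    (G.commonNeighbors u w).ncard = t + 1 ∧
    v ∈ G.commonNeighbors u w ∧
    (∀ x ∈ G.commonNeighbors u w, x ≠ v → x ∉ G.neighborSet v) ∧
    ∀ x ∈ G.commonNeighbors u w, ∀ y ∈ G.commonNeighbors u w, x ≠ v → y ≠ v →
      G.neighborSet v ∩ G.neighborSet x = G.neighborSet v ∩ G.neighborSet y := by
  have hcard := ncard_commonNeighbors_of_not_adj hG huw hnadj
  exact ⟨hcard, common_neighbors_in_first_subconstituent_general hreg.1
    (fun x hxv hvx ↦ (hreg.2 x hxv hvx).1) hu hw huw hnadj hcard⟩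
end
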